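/- arXiv:2502.08905 — 2 statements merged into one kernel-verified Lean document; each statement's English description precedes it below -/
import Mathlib

section
/- Let A and B be n×n Hermitian complex matrices, and let the eigenvalues of A, B, and A+B be arranged in ascending order as λ_1 ≤ λ_2 ≤ … ≤ λ_n. Then for every index i ∈ {1,…,n} and every j ∈ {0,1,…,n−i}, one has λ_i(A+B) ≤ λ_{i+j}(A) + λ_{n−j}(B). -/
/-- The eigenvalues of a Hermitian matrix, arranged in ascending order
(`sortedEigenvalues hA k` is the `(k+1)`-st smallest eigenvalue of `A`). -/
noncomputable def sortedEigenvalues {n : ℕ} {A : Matrix (Fin n) (Fin n) ℂ}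
    (hA : A.IsHermitian) : Fin n → ℝ :=
  hA.eigenvalues ∘ Tuple.sort hA.eigenvalues

/-!
Among the eigenvectors of `S` for its `q` largest eigenvalues, those of `T` for its `r` largest,
and those of `S + T` below its `p`-th (counting from `0`, in descending order), there are
`q + r + (n - 1 - p)` vectors. If `q + r ≤ p` this is less than the dimension, so some `x ≠ 0` is
orthogonal to all of them. Expanding in eigenbases then bounds the quadratic forms of `S` and `T`
at `x` from above and that of `S + T` from below, and adding the bounds compares the eigenvalues.
The ascending indices `i`, `i + j`, `n - j` (counting from `1`) become `p = n - i`,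
`q = n - i - j`, `r = j`, for which `p = q + r`.
-/

section SymmetricOperator

variable {𝕜 E : Type*} [RCLike 𝕜] [NormedAddCommGroup E] [InnerProductSpace 𝕜 E]
  [FiniteDimensional 𝕜 E] {n : ℕ} {S T : E →ₗ[𝕜] E}

theorem exists_ne_zero_forall_inner_eq_zero {ι : Type*} [Fintype ι] (v : ι → E)
    (hv : Fintype.card ι < Module.finrank 𝕜 E) : ∃ x ≠ 0, ∀ i, inner 𝕜 (v i) x = 0 := by
  let coords : E →ₗ[𝕜] ι → 𝕜 := LinearMap.pi fun i => innerₛₗ 𝕜 (v i)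
  have hker : LinearMap.ker coords ≠ ⊥ := LinearMap.ker_ne_bot_of_finrank_lt (by simpa using hv)
  obtain ⟨x, hx, hx0⟩ := Submodule.exists_mem_ne_zero_of_ne_bot hker
  exact ⟨x, hx0, fun i => congrFun (LinearMap.mem_ker.mp hx) i⟩

theorem re_inner_apply_eq_sum_eigenvalues (hT : T.IsSymmetric) (hn : Module.finrank 𝕜 E = n)
    (x : E) :
    RCLike.re (inner 𝕜 x (T x)) =
      ∑ k, hT.eigenvalues hn k * ‖inner 𝕜 (hT.eigenvectorBasis hn k) x‖ ^ 2 := by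
  have apply_coord (k : Fin n) : inner 𝕜 (hT.eigenvectorBasis hn k) (T x) =
      hT.eigenvalues hn k * inner 𝕜 (hT.eigenvectorBasis hn k) x := by
    simpa only [OrthonormalBasis.repr_apply_apply] using
      hT.eigenvectorBasis_apply_self_apply hn x k
  rw [← (hT.eigenvectorBasis hn).sum_inner_mul_inner, map_sum]
  refine Finset.sum_congr rfl fun k _ => ?_
  rw [apply_coord, mul_left_comm, RCLike.re_ofReal_mul, inner_mul_symm_re_eq_norm, norm_mul,
    norm_inner_symm, ← sq]

theorem re_inner_apply_le_eigenvalues_mul (hT : T.IsSymmetric) (hn : Module.finrank 𝕜 E = n)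
    (i : Fin n) {x : E} (hx : ∀ k < i, inner 𝕜 (hT.eigenvectorBasis hn k) x = 0) :
    RCLike.re (inner 𝕜 x (T x)) ≤ hT.eigenvalues hn i * ‖x‖ ^ 2 := by
  rw [re_inner_apply_eq_sum_eigenvalues hT hn,
    ← (hT.eigenvectorBasis hn).sum_sq_norm_inner_right, Finset.mul_sum]
  refine Finset.sum_le_sum fun k _ => ?_
  rcases lt_or_ge k i with hki | hik
  · simp [hx k hki]
  · gcongr
    exact hT.eigenvalues_antitone hn hik

theorem eigenvalues_mul_le_re_inner_apply (hT : T.IsSymmetric) (hn : Module.finrank 𝕜 E = n)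
    (i : Fin n) {x : E} (hx : ∀ k > i, inner 𝕜 (hT.eigenvectorBasis hn k) x = 0) :
    hT.eigenvalues hn i * ‖x‖ ^ 2 ≤ RCLike.re (inner 𝕜 x (T x)) := by
  rw [re_inner_apply_eq_sum_eigenvalues hT hn,
    ← (hT.eigenvectorBasis hn).sum_sq_norm_inner_right, Finset.mul_sum]
  refine Finset.sum_le_sum fun k _ => ?_
  rcases lt_or_ge i k with hik | hki
  · simp [hx k hik]
  · gcongr
    exact hT.eigenvalues_antitone hn hki

theorem weyl_inequality_upper_general (hS : S.IsSymmetric) (hT : T.IsSymmetric)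
    (hn : Module.finrank 𝕜 E = n) {p q r : Fin n} (hqr : (q + r : ℕ) ≤ p) :
    (hS.add hT).eigenvalues hn p ≤ hS.eigenvalues hn q + hT.eigenvalues hn r := by
  let constraints : Finset.Iio q ⊕ Finset.Iio r ⊕ Finset.Ioi p → E :=
    Sum.elim (fun k => hS.eigenvectorBasis hn k) <|
      Sum.elim (fun k => hT.eigenvectorBasis hn k) fun k => (hS.add hT).eigenvectorBasis hn k
  obtain ⟨x, hx0, hx⟩ := exists_ne_zero_forall_inner_eq_zero (𝕜 := 𝕜) constraints <| by
    simp only [Fintype.card_sum, Fintype.card_coe, Fin.card_Iio, Fin.card_Ioi, hn]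
    omega
  have hxS : ∀ k < q, inner 𝕜 (hS.eigenvectorBasis hn k) x = 0 :=
    fun k hk => hx (.inl ⟨k, Finset.mem_Iio.mpr hk⟩)
  have hxT : ∀ k < r, inner 𝕜 (hT.eigenvectorBasis hn k) x = 0 :=
    fun k hk => hx (.inr (.inl ⟨k, Finset.mem_Iio.mpr hk⟩))
  have hxST : ∀ k > p, inner 𝕜 ((hS.add hT).eigenvectorBasis hn k) x = 0 :=
    fun k hk => hx (.inr (.inr ⟨k, Finset.mem_Ioi.mpr hk⟩))
  refine le_of_mul_le_mul_right ?_ (pow_pos (norm_pos_iff.mpr hx0) 2)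
  calc (hS.add hT).eigenvalues hn p * ‖x‖ ^ 2
      ≤ RCLike.re (inner 𝕜 x ((S + T) x)) := eigenvalues_mul_le_re_inner_apply _ hn p hxST
    _ = RCLike.re (inner 𝕜 x (S x)) + RCLike.re (inner 𝕜 x (T x)) := by
      rw [LinearMap.add_apply, inner_add_right, map_add]
    _ ≤ hS.eigenvalues hn q * ‖x‖ ^ 2 + hT.eigenvalues hn r * ‖x‖ ^ 2 :=
      add_le_add (re_inner_apply_le_eigenvalues_mul hS hn q hxS)
        (re_inner_apply_le_eigenvalues_mul hT hn r hxT)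
    _ = (hS.eigenvalues hn q + hT.eigenvalues hn r) * ‖x‖ ^ 2 := (add_mul _ _ _).symm

end SymmetricOperator

theorem exists_equiv_eigenvalues_comp_eq {𝕜 ι : Type*} [RCLike 𝕜] [Fintype ι] [DecidableEq ι]
    {A : Matrix ι ι 𝕜} (hA : A.IsHermitian) {n : ℕ}
    (hn : Module.finrank 𝕜 (EuclideanSpace 𝕜 ι) = n) :
    ∃ σ : Fin n ≃ ι,
      hA.eigenvalues ∘ σ = (Matrix.isSymmetric_toEuclideanLin_iff.mpr hA).eigenvalues hn := by
  obtain rfl : Fintype.card ι = n := finrank_euclideanSpace.symm.trans hn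
  refine ⟨Fintype.equivOfCardEq (Fintype.card_fin _), funext fun k => ?_⟩
  simp only [Function.comp_apply, Matrix.IsHermitian.eigenvalues, Matrix.IsHermitian.eigenvalues₀,
    Equiv.symm_apply_apply]

theorem sortedEigenvalues_eq_eigenvalues_rev {n : ℕ} {A : Matrix (Fin n) (Fin n) ℂ}
    (hA : A.IsHermitian) (k : Fin n) :
    sortedEigenvalues hA k =
      (Matrix.isSymmetric_toEuclideanLin_iff.mpr hA).eigenvalues finrank_euclideanSpace_fin
        k.rev := by
  obtain ⟨σ, hσ⟩ := exists_equiv_eigenvalues_comp_eq hA finrank_euclideanSpace_fin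
  have hmono : Monotone (hA.eigenvalues ∘ (Fin.revPerm.trans σ)) := by
    rw [Equiv.coe_trans, ← Function.comp_assoc, hσ]
    exact (LinearMap.IsSymmetric.eigenvalues_antitone _ _).comp Fin.rev_anti
  calc sortedEigenvalues hA k
      = hA.eigenvalues (σ k.rev) :=
        congrFun (Tuple.comp_sort_eq_comp_iff_monotone.mpr hmono).symm k
    _ = _ := congrFun hσ k.rev

/-- Weyl's inequality (upper bound): for Hermitian `A, B` and `1 ≤ i ≤ n`, `0 ≤ j ≤ n - i`,
`λ_i(A+B) ≤ λ_{i+j}(A) + λ_{n-j}(B)` (eigenvalues in ascending order, 1-based indices). -/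
theorem weyl_inequality_upper {n : ℕ} (A B : Matrix (Fin n) (Fin n) ℂ)
    (hA : A.IsHermitian) (hB : B.IsHermitian)
    (i j : ℕ) (hi1 : 1 ≤ i) (hin : i ≤ n) (hj : j ≤ n - i) :
    sortedEigenvalues (hA.add hB) ⟨i - 1, by omega⟩ ≤
      sortedEigenvalues hA ⟨i + j - 1, by omega⟩ +
        sortedEigenvalues hB ⟨n - j - 1, by omega⟩ := by
  simp only [sortedEigenvalues_eq_eigenvalues_rev, map_add]
  exact weyl_inequality_upper_general _ _ _ (by simp only [Fin.val_rev]; omega)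
end

section
/- Let γ be the standard Gaussian measure on ℝ^d, let w₀ ∈ ℝ^d, and let x₁, …, x_n ∈ ℝ^d. Define the n×n real matrix H by H_{ij} = ⟨x_i, x_j⟩ · γ({w ∈ ℝ^d : ⟨w₀ + w, x_i⟩ ≥ 0 and ⟨w₀ + w, x_j⟩ ≥ 0}). Then H is symmetric positive semidefinite. -/
open Matrix MeasureTheory ProbabilityTheory

/-- The standard Gaussian measure on `ℝ^d`: the `d`-fold product of `N(0,1)`. -/
noncomputable def stdGaussian (d : ℕ) : Measure (Fin d → ℝ) :=
  Measure.pi fun _ : Fin d => gaussianReal 0 1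

/-! With respect to any finite measure, `H` is the Hadamard product of the Gram matrix of the `x i`
and the matrix of measures of pairwise intersections of the activation events
`{w | 0 ≤ ⟪w₀ + w, x i⟫}`. The latter is again a Gram matrix, of indicator functions in `L²`, so
the Schur product theorem applies. -/

open scoped RealInnerProductSpace

theorem posSemidef_inner_mul_measureReal_inter {ι E Ω : Type*} [Finite ι]
    [SeminormedAddCommGroup E] [InnerProductSpace ℝ E] [MeasurableSpace Ω] {μ : Measure Ω}
    (v : ι → E) {s : ι → Set Ω} (hs : ∀ i, MeasurableSet (s i))
    (hμs : ∀ i, μ (s i) ≠ ⊤ := by finiteness) :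
    (Matrix.of fun i j => ⟪v i, v j⟫ * μ.real (s i ∩ s j)).PosSemidef :=
  (posSemidef_gram ℝ v).hadamard (posSemidef_matrix_measure_inter hs hμs)

theorem gram_relu_posSemidef_general {ι E Ω : Type*} [Finite ι]
    [SeminormedAddCommGroup E] [InnerProductSpace ℝ E] [MeasurableSpace E] [OpensMeasurableSpace E]
    [MeasurableSpace Ω] (μ : Measure Ω) [IsFiniteMeasure μ] {W : Ω → E} (hW : Measurable W)
    (x : ι → E) :
    (Matrix.of fun i j =>
      ⟪x i, x j⟫ * μ.real {ω | 0 ≤ ⟪W ω, x i⟫ ∧ 0 ≤ ⟪W ω, x j⟫}).PosSemidef := by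
  have h_halfspace (y : E) : MeasurableSet {w : E | 0 ≤ ⟪w, y⟫} :=
    (isClosed_le continuous_const (by fun_prop)).measurableSet
  exact posSemidef_inner_mul_measureReal_inter x fun i => hW (h_halfspace (x i))

instance isProbabilityMeasure_stdGaussian (d : ℕ) :
    IsProbabilityMeasure (_root_.stdGaussian d) :=
  inferInstanceAs (IsProbabilityMeasure (Measure.pi fun _ : Fin d => gaussianReal 0 1))

/-- Let `γ` be the standard Gaussian measure on `ℝ^d`, `w₀ ∈ ℝ^d`, and `x₁, …, x_n ∈ ℝ^d`.
The matrix `H` with `H i j = ⟨x i, x j⟩ · γ {w | ⟨w₀ + w, x i⟩ ≥ 0 ∧ ⟨w₀ + w, x j⟩ ≥ 0}`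
is symmetric positive semidefinite. -/
theorem gram_relu_posSemidef {d n : ℕ} (w₀ : Fin d → ℝ) (x : Fin n → Fin d → ℝ) :
    (Matrix.of fun i j : Fin n =>
      (x i ⬝ᵥ x j) *
        ((stdGaussian d)
          {w | 0 ≤ (w₀ + w) ⬝ᵥ x i ∧ 0 ≤ (w₀ + w) ⬝ᵥ x j}).toReal).PosSemidef := by
  simpa only [EuclideanSpace.inner_toLp_toLp, star_trivial, dotProduct_comm, Measure.real] using
    gram_relu_posSemidef_general (_root_.stdGaussian d)
      (W := fun w => WithLp.toLp 2 (w₀ + w)) (by fun_prop) fun i => WithLp.toLp 2 (x i)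
end
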